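/- Let ε₂ ∈ (0, 0.2) and ε₃ > 0 be constants, δ = ( ε₂ / |A|^{2/ε₂} )⁴, and suppose ε₁ ≥ 4ε₂·log₂|A| + 8ε₃. In the setup, if den(S) > 1 − δ, then for every good index i: Σ_{good w_{i−1}} Pr[w_{i−1}]·q_i(w_{i−1}) ≥ ( ε₁ / (8·log₂|A|) )·q_i. -/

import Mathlib

/-!
Fix a good index `i`, and write `μ w = Pr[W = w]`, `r w = Pr[X_i = 1 | W = w]`, `q = ∑ μ r` and
`L = log₂ |A| ≥ 1`.

*Conditioning on `X_i = 1` does not blow up rare events.* Goodness of `i` says that the mutual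
information `I(X_i; W) = H(q) - H(X_i | W)` is at most `2qL`, and `I(X_i; W)` dominates `q` times
the divergence of the law of `W` given `X_i = 1` from `μ`. Gibbs' inequality against `μ` tilted by
`1/η` on an event `B` with `μ(B) ≤ η` then yields
`Pr[B, X_i = 1] · log₂ (1/η) ≤ (2L + 1) q` (`mass_transfer`). For `η = √δ` one has
`ε₂ log₂ (1/η) ≥ 4L ≥ 2L + 1`, so `Pr[B, X_i = 1] ≤ ε₂ q`.

*Most prefixes have a large neighbourhood.* Adjacent vertices have neighbouring prefixes, so the
non-neighbouring pairs of prefixes have `μ × μ`-mass below `δ = η²` (`prefix_nonnbr_le`). By Markov's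
inequality all `w` outside a set of `μ`-mass at most `η` have non-neighbours of mass at most `η`.
The first step, applied to the exceptional set and to the set of non-neighbours of `w`, shows that
the exceptional set has `μ r`-mass at most `ε₂ q` and that every other `w` has a neighbourhood of
`μ r`-mass at least `(1 - ε₂) q`.

*Entropy count.* `∑ μ(w) β(w) = β_i ≥ ε₁ q / 2`, where `β(w) ≤ r(w) L` always and
`β(w) < ε₃ r(w)` for each prefix that fails to be good but is not exceptional. Hence the good mass
`G` satisfies `L G ≥ (ε₁/2 - ε₂ L - ε₃) q ≥ ε₁ q / 8`.
-/


open Classical Finset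

noncomputable section

/-- Binary entropy function (base 2). -/
def binEnt (p : ℝ) : ℝ := -(p * Real.logb 2 p) - (1 - p) * Real.logb 2 (1 - p)

/-- Entropy (base 2) of the random variable `f` under the uniform distribution on `S`. -/
def fEnt {V B : Type*} [Fintype B] (S : Finset V) (f : V → B) : ℝ :=
  ∑ b : B,
    -((((S.filter fun v => f v = b).card : ℝ) / (S.card : ℝ)) *
      Real.logb 2 (((S.filter fun v => f v = b).card : ℝ) / (S.card : ℝ)))

/-- Conditional entropy `H(f | g)` under the uniform distribution on `S`. -/
def cEnt {V B C : Type*} [Fintype B] [Fintype C] (S : Finset V) (f : V → B) (g : V → C) : ℝ :=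
  ∑ c : C, (((S.filter fun v => g v = c).card : ℝ) / (S.card : ℝ)) *
      fEnt (S.filter fun v => g v = c) f

/-- Probability of the event `P` under the uniform distribution on `S`. -/
def prS {V : Type*} (S : Finset V) (P : V → Prop) : ℝ :=
  ((S.filter P).card : ℝ) / (S.card : ℝ)

/-- A 2CSP instance on `n` variables over alphabet `A`: an undirected constraint graph
together with a relation on each constraint edge. -/
structure CSP (n : ℕ) (A : Type*) where
  adj : Fin n → Fin n → Prop
  symm : ∀ {i j}, adj i j → adj j i
  irrefl : ∀ i, ¬ adj i i
  rel : Fin n → Fin n → A → A → Prop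
  rel_symm : ∀ i j a b, rel i j a b ↔ rel j i b a

/-- ρ = ⌈√n · log log n⌉. -/
def rho (n : ℕ) : ℕ := ⌈Real.sqrt n * Real.logb 2 (Real.logb 2 n)⌉₊

/-- k = C(n, ρ). -/
def kk (n : ℕ) : ℕ := n.choose (rho n)

/-- N = C(n,ρ)·|A|^ρ, the number of vertices of the product graph. -/
def NN (n a : ℕ) : ℕ := n.choose (rho n) * a ^ (rho n)

/-- k' = k · N^(−ε₀ / log log N). -/
def kprime (n a : ℕ) (ε₀ : ℝ) : ℝ :=
  (kk n : ℝ) * (NN n a : ℝ) ^ (-(ε₀ / Real.logb 2 (Real.logb 2 (NN n a))))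

/-- Vertices of the product graph: pairs (T, y) with T ⊆ {1,…,n}, |T| = ρ, y : T → A. -/
abbrev Vtx (n ρ : ℕ) (A : Type*) := Σ T : {T : Finset (Fin n) // T.card = ρ}, (↥T.1 → A)

variable {n ρ : ℕ} {A : Type*} [Fintype A] [DecidableEq A]

/-- X_i : indicator of the event that variable i is chosen by vertex v. -/
def Xb (v : Vtx n ρ A) (i : Fin n) : Bool := decide (i ∈ v.1.1)

/-- Y_i : value of vertex v on variable i (default a₀ if i is not chosen). -/
def Yv (a₀ : A) (v : Vtx n ρ A) (i : Fin n) : A :=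
  if h : i ∈ v.1.1 then v.2 ⟨i, h⟩ else a₀

/-- Type of prefix values: (X₁,…,X_{i},Y₁,…,Y_{i}) padded with defaults. -/
abbrev Pfx (n : ℕ) (A : Type*) := (Fin n → Bool) × (Fin n → A)

/-- W_{i-1} : the prefix of v consisting of (X_j, Y_j) for j < i (0-indexed cutoff i). -/
def Wp (a₀ : A) (i : ℕ) (v : Vtx n ρ A) : Pfx n A :=
  (fun j => if (j : ℕ) < i then Xb v j else false,
   fun j => if (j : ℕ) < i then Yv a₀ v j else a₀)

/-- q_i = Pr[X_i = 1]. -/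
def qi (S : Finset (Vtx n ρ A)) (i : Fin n) : ℝ := prS S (fun v => Xb v i = true)

/-- Pr[w_{i-1}] : probability of the prefix value w. -/
def prW (a₀ : A) (S : Finset (Vtx n ρ A)) (i : ℕ) (w : Pfx n A) : ℝ :=
  prS S (fun v => Wp a₀ i v = w)

/-- q_i(w_{i-1}) = Pr[X_i = 1 | W_{i-1} = w]. -/
def qiW (a₀ : A) (S : Finset (Vtx n ρ A)) (i : Fin n) (w : Pfx n A) : ℝ :=
  prS (S.filter fun v => Wp a₀ (i : ℕ) v = w) (fun v => Xb v i = true)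

/-- α_i = H(X_i | W_{i-1}). -/
def alphaE (a₀ : A) (S : Finset (Vtx n ρ A)) (i : Fin n) : ℝ :=
  cEnt S (fun v => Xb v i) (Wp a₀ (i : ℕ))

/-- β_i = H(Y_i | W_{i-1}, X_i). -/
def betaE (a₀ : A) (S : Finset (Vtx n ρ A)) (i : Fin n) : ℝ :=
  cEnt S (fun v => Yv a₀ v i) (fun v => (Wp a₀ (i : ℕ) v, Xb v i))

/-- β_i(w_{i-1}) = H(Y_i | X_i, W_{i-1} = w). -/
def betaW (a₀ : A) (S : Finset (Vtx n ρ A)) (i : Fin n) (w : Pfx n A) : ℝ :=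
  cEnt (S.filter fun v => Wp a₀ (i : ℕ) v = w) (fun v => Yv a₀ v i) (fun v => Xb v i)

/-- A good index: α_i ≥ H(q_i) − 2q_i·log|A| and β_i ≥ (1/2)ε₁q_i. -/
def GoodIdx (a₀ : A) (S : Finset (Vtx n ρ A)) (ε₁ : ℝ) (i : Fin n) : Prop :=
  alphaE a₀ S i ≥ binEnt (qi S i) - 2 * qi S i * Real.logb 2 (Fintype.card A) ∧
  betaE a₀ S i ≥ (1 / 2) * ε₁ * qi S i

/-- Neighborhood relation of the i-th prefix graph (self-loops included): two prefixes are
neighbors iff wherever both choose a variable j < i they assign it the same label. -/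
def PfxNbr (n : ℕ) (A : Type*) (i : ℕ) (w σ' : Pfx n A) : Prop :=
  ∀ j : Fin n, (j : ℕ) < i → w.1 j = true → σ'.1 j = true → w.2 j = σ'.2 j

/-- A good prefix. -/
def GoodPfx (a₀ : A) (S : Finset (Vtx n ρ A)) (ε₁ ε₂ ε₃ : ℝ) (i : Fin n) (w : Pfx n A) : Prop :=
  GoodIdx a₀ S ε₁ i ∧
  (∑ σ' : Pfx n A, if PfxNbr n A (i : ℕ) w σ' then prW a₀ S (i : ℕ) σ' * qiW a₀ S i σ' else 0)
      ≥ (1 - ε₂) * qi S i ∧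
  betaW a₀ S i w ≥ ε₃ * qiW a₀ S i w

/-- A vertex violating an internal 2CSP constraint (an isolated vertex). -/
def Violates (ψ : CSP n A) (v : Vtx n ρ A) : Prop :=
  ∃ i j, ∃ (hi : i ∈ v.1.1) (hj : j ∈ v.1.1),
    ψ.adj i j ∧ ¬ ψ.rel i j (v.2 ⟨i, hi⟩) (v.2 ⟨j, hj⟩)

/-- Adjacency in the product graph G_ψ: both endpoints are non-isolated, they agree on
common variables, and all cross 2CSP constraints are satisfied. -/
def PAdj (ψ : CSP n A) (u v : Vtx n ρ A) : Prop :=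
  ¬ Violates ψ u ∧ ¬ Violates ψ v ∧
  (∀ i, ∀ (hu : i ∈ u.1.1) (hv : i ∈ v.1.1), u.2 ⟨i, hu⟩ = v.2 ⟨i, hv⟩) ∧
  (∀ i j, ∀ (hu : i ∈ u.1.1) (hv : j ∈ v.1.1), ψ.adj i j → ψ.rel i j (u.2 ⟨i, hu⟩) (v.2 ⟨j, hv⟩))

/-- den(S) : the edge density of S in the product graph. -/
def den (ψ : CSP n A) (S : Finset (Vtx n ρ A)) : ℝ :=
  (((S ×ˢ S).filter fun p => PAdj ψ p.1 p.2).card : ℝ) / ((S.card : ℝ) ^ 2)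

/-- den(G_{i+1}) : weighted density of the prefix graph with cutoff i. -/
def pfxDen (a₀ : A) (S : Finset (Vtx n ρ A)) (i : ℕ) : ℝ :=
  ∑ w : Pfx n A, ∑ σ' : Pfx n A,
    if PfxNbr n A i w σ' then prW a₀ S i w * prW a₀ S i σ' else 0

/-- Number of (ordered) satisfied constraint pairs for assignment τ. -/
def nSat (ψ : CSP n A) (τ : Fin n → A) : ℕ :=
  ((univ ×ˢ univ : Finset (Fin n × Fin n)).filter fun p =>
    ψ.adj p.1 p.2 ∧ ψ.rel p.1 p.2 (τ p.1) (τ p.2)).card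

/-- Number of (ordered) constraint pairs. -/
def nEdg (ψ : CSP n A) : ℕ :=
  ((univ ×ˢ univ : Finset (Fin n × Fin n)).filter fun p => ψ.adj p.1 p.2).card

/-- The constraint graph is d-regular. -/
def Regular (ψ : CSP n A) (d : ℕ) : Prop :=
  ∀ i, ((univ : Finset (Fin n)).filter fun j => ψ.adj i j).card = d

/-- A typical prefix: (1−ε₅)ρ/n < q_i(w) < (1+ε₅)ρ/n. -/
def TypPfx (a₀ : A) (S : Finset (Vtx n ρ A)) (ε₅ : ℝ) (i : Fin n) (w : Pfx n A) : Prop :=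
  (1 - ε₅) * ((ρ : ℝ) / (n : ℝ)) < qiW a₀ S i w ∧ qiW a₀ S i w < (1 + ε₅) * ((ρ : ℝ) / (n : ℝ))

/-- A typical variable: typical prefixes have total probability at least 1−ε₅. -/
def TypVar (a₀ : A) (S : Finset (Vtx n ρ A)) (ε₅ : ℝ) (i : Fin n) : Prop :=
  (∑ w : Pfx n A, if TypPfx a₀ S ε₅ i w then prW a₀ S (i : ℕ) w else 0) ≥ 1 - ε₅

/-- I(u,v) : the number of tests between u and v (ordered pairs (i,j) forming a constraint
edge between typical variables, chosen with typical prefixes by u, v respectively). -/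
def Icnt (ψ : CSP n A) (a₀ : A) (S : Finset (Vtx n ρ A)) (ε₅ : ℝ) (u v : Vtx n ρ A) : ℕ :=
  ((univ ×ˢ univ : Finset (Fin n × Fin n)).filter fun p =>
    ψ.adj p.1 p.2 ∧ TypVar a₀ S ε₅ p.1 ∧ TypVar a₀ S ε₅ p.2 ∧
    Xb u p.1 = true ∧ Xb v p.2 = true ∧
    TypPfx a₀ S ε₅ p.1 (Wp a₀ (p.1 : ℕ) u) ∧ TypPfx a₀ S ε₅ p.2 (Wp a₀ (p.2 : ℕ) v)).card

/-- I^T(i,j) : the number of tests of the constraint (i,j) over pairs of S. -/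
def ITop (a₀ : A) (S : Finset (Vtx n ρ A)) (ε₅ : ℝ) (i j : Fin n) : ℕ :=
  ((S ×ˢ S).filter fun p =>
    Xb p.1 i = true ∧ Xb p.2 j = true ∧
    TypPfx a₀ S ε₅ i (Wp a₀ (i : ℕ) p.1) ∧ TypPfx a₀ S ε₅ j (Wp a₀ (j : ℕ) p.2)).card

/-- E_{u,v}[I(u,v)] for u,v independent uniform on S. -/
def EI (ψ : CSP n A) (a₀ : A) (S : Finset (Vtx n ρ A)) (ε₅ : ℝ) : ℝ :=
  (∑ u ∈ S, ∑ v ∈ S, (Icnt ψ a₀ S ε₅ u v : ℝ)) / ((S.card : ℝ) ^ 2)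

/-- E_{u,v}[I(u,v)²] for u,v independent uniform on S. -/
def EI2 (ψ : CSP n A) (a₀ : A) (S : Finset (Vtx n ρ A)) (ε₅ : ℝ) : ℝ :=
  (∑ u ∈ S, ∑ v ∈ S, (Icnt ψ a₀ S ε₅ u v : ℝ) ^ 2) / ((S.card : ℝ) ^ 2)

end


/-! ### Entropy inequalities -/

lemma mul_logb_sub_ge {x y : ℝ} (hx : 0 ≤ x) (hy : 0 < y) :
    (x - y) / Real.log 2 ≤ x * Real.logb 2 x - x * Real.logb 2 y := by
  have h2 : 0 < Real.log 2 := Real.log_pos (by norm_num)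
  have key : x - y ≤ x * Real.log x - x * Real.log y := by
    rcases hx.eq_or_lt with rfl | hx
    · simp [hy.le]
    · have h := Real.log_le_sub_one_of_pos (div_pos hy hx)
      rw [Real.log_div hy.ne' hx.ne'] at h
      have h3 : x * (Real.log y - Real.log x) ≤ x * (y / x - 1) :=
        mul_le_mul_of_nonneg_left h hx.le
      have h4 : x * (y / x - 1) = y - x := by field_simp
      linarith
  have e : x * Real.logb 2 x - x * Real.logb 2 y
      = (x * Real.log x - x * Real.log y) / Real.log 2 := by
    unfold Real.logb; ring
  rw [e]
  exact div_le_div_of_nonneg_right key h2.le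

/-- Here `μ` is the law of `W` and `r w = Pr[X = 1 | W = w]`. If the mutual information
`H(q) - H(X | W)` is at most `2 q L`, then an event `B` that is `μ`-unlikely stays unlikely after
conditioning on `X = 1`. -/
lemma mass_transfer {ι : Type*} [Fintype ι] (μ r : ι → ℝ) (q L η : ℝ)
    (hμ : ∀ w, 0 ≤ μ w) (hμ1 : ∑ w, μ w = 1) (hr0 : ∀ w, 0 ≤ r w) (hr1 : ∀ w, r w ≤ 1)
    (hq : ∑ w, μ w * r w = q) (hq0 : 0 < q)
    (hα : binEnt q - 2 * q * L ≤ ∑ w, μ w * binEnt (r w))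
    (hη : 0 < η) (B : ι → Prop) [DecidablePred B]
    (hB : (∑ w, if B w then μ w else 0) ≤ η) :
    (∑ w, if B w then μ w * r w else 0) * Real.logb 2 (1 / η) ≤ (2 * L + 1) * q := by
  have h2 : 0 < Real.log 2 := Real.log_pos (by norm_num)
  have hq' : ∑ w, μ w * (1 - r w) = 1 - q := by
    simp only [mul_sub, mul_one, Finset.sum_sub_distrib, hμ1, hq]
  have hc0 : ∀ w, 0 ≤ μ w * (1 - r w) := fun w => mul_nonneg (hμ w) (by linarith [hr1 w])
  -- Gibbs' inequality against the tilted density `r ≡ y`, which is larger on `B`.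
  set y : ι → ℝ := fun w => if B w then q / (2 * η) else q / 2 with hy
  have hy0 : ∀ w, 0 < y w := by
    intro w; simp only [hy]; split_ifs <;> positivity
  have hysum : ∑ w, μ w * y w ≤ q := by
    have h1 : ∑ w, μ w * y w ≤
        ∑ w, ((if B w then μ w else 0) * (q / (2 * η)) + μ w * (q / 2)) := by
      refine Finset.sum_le_sum fun w _ => ?_
      have := mul_nonneg (hμ w) hq0.le
      simp only [hy]; split_ifs <;> nlinarith
    rw [Finset.sum_add_distrib, ← Finset.sum_mul, ← Finset.sum_mul, hμ1] at h1
    have h3 : (∑ w, if B w then μ w else 0) * (q / (2 * η)) ≤ η * (q / (2 * η)) :=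
      mul_le_mul_of_nonneg_right hB (by positivity)
    have h4 : η * (q / (2 * η)) = q / 2 := by field_simp
    linarith
  have hA : 0 ≤ ∑ w, μ w * (r w * Real.logb 2 (r w) - r w * Real.logb 2 (y w)) := by
    have h1 : ∑ w, μ w * ((r w - y w) / Real.log 2) ≤
        ∑ w, μ w * (r w * Real.logb 2 (r w) - r w * Real.logb 2 (y w)) :=
      Finset.sum_le_sum fun w _ =>
        mul_le_mul_of_nonneg_left (mul_logb_sub_ge (hr0 w) (hy0 w)) (hμ w)
    refine le_trans ?_ h1
    have h3 : ∑ w, μ w * ((r w - y w) / Real.log 2)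
        = (∑ w, μ w * r w - ∑ w, μ w * y w) / Real.log 2 := by
      rw [← Finset.sum_sub_distrib, Finset.sum_div]
      exact Finset.sum_congr rfl fun w _ => by ring
    rw [h3, hq]
    exact div_nonneg (by linarith) h2.le
  have hC : 0 ≤ ∑ w, μ w * ((1 - r w) * Real.logb 2 (1 - r w)
      - (1 - r w) * Real.logb 2 (1 - q)) := by
    have hq1 : 0 ≤ 1 - q := hq' ▸ Finset.sum_nonneg fun w _ => hc0 w
    rcases hq1.eq_or_lt with h0 | h0
    -- If `q = 1` then `r = 1` almost surely, and every term vanishes.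
    · have hz : ∀ w, μ w * (1 - r w) = 0 := fun w =>
        (Finset.sum_eq_zero_iff_of_nonneg fun w _ => hc0 w).1 (hq'.trans h0.symm) w
          (Finset.mem_univ w)
      refine (Finset.sum_eq_zero fun w _ => ?_).ge
      linear_combination (Real.logb 2 (1 - r w) - Real.logb 2 (1 - q)) * hz w
    · have h1 : ∑ w, μ w * (((1 - r w) - (1 - q)) / Real.log 2) ≤ _ :=
        Finset.sum_le_sum fun w _ => mul_le_mul_of_nonneg_left
          (mul_logb_sub_ge (x := 1 - r w) (by linarith [hr1 w]) h0) (hμ w)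
      refine le_trans ?_ h1
      have h3 : ∑ w, μ w * (((1 - r w) - (1 - q)) / Real.log 2)
          = (∑ w, μ w * (1 - r w) - (∑ w, μ w) * (1 - q)) / Real.log 2 := by
        rw [Finset.sum_mul, ← Finset.sum_sub_distrib, Finset.sum_div]
        exact Finset.sum_congr rfl fun w _ => by ring
      rw [h3, hq', hμ1]; simp
  have hylog : ∀ w, Real.logb 2 (y w) =
      Real.logb 2 q - 1 + (if B w then Real.logb 2 (1 / η) else 0) := by
    intro w
    simp only [hy]
    split_ifs
    · rw [show q / (2 * η) = q / 2 * (1 / η) by field_simp,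
        Real.logb_mul (by positivity) (by positivity), Real.logb_div hq0.ne' (by norm_num),
        Real.logb_self_eq_one (by norm_num)]
    · rw [Real.logb_div hq0.ne' (by norm_num), Real.logb_self_eq_one (by norm_num)]; ring
  have hsum : (∑ w, μ w * (r w * Real.logb 2 (r w) - r w * Real.logb 2 (y w))) +
      (∑ w, μ w * ((1 - r w) * Real.logb 2 (1 - r w) - (1 - r w) * Real.logb 2 (1 - q)))
      = -(∑ w, μ w * binEnt (r w)) - (∑ w, μ w * r w) * (Real.logb 2 q - 1)
        - (∑ w, if B w then μ w * r w else 0) * Real.logb 2 (1 / η)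
        - (∑ w, μ w * (1 - r w)) * Real.logb 2 (1 - q) := by
    rw [Finset.sum_mul, Finset.sum_mul, Finset.sum_mul, ← Finset.sum_add_distrib,
      ← Finset.sum_neg_distrib, ← Finset.sum_sub_distrib, ← Finset.sum_sub_distrib,
      ← Finset.sum_sub_distrib]
    refine Finset.sum_congr rfl fun w _ => ?_
    rw [hylog]; unfold binEnt
    split_ifs <;> ring
  rw [hq, hq'] at hsum
  unfold binEnt at hα hsum
  nlinarith

lemma fEnt_le_logb_card {V B : Type*} [Fintype B] [Nonempty B] (S : Finset V) (f : V → B) :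
    fEnt S f ≤ Real.logb 2 (Fintype.card B) := by
  have hB : (0 : ℝ) < Fintype.card B := by exact_mod_cast Fintype.card_pos
  have h2 : 0 < Real.log 2 := Real.log_pos (by norm_num)
  have hL : 0 ≤ Real.logb 2 (Fintype.card B) :=
    Real.logb_nonneg (by norm_num) (by exact_mod_cast Fintype.card_pos)
  rcases S.eq_empty_or_nonempty with rfl | hne
  · simpa [fEnt] using hL
  have hS : (0 : ℝ) < S.card := by exact_mod_cast hne.card_pos
  set p : B → ℝ := fun b => ((S.filter fun v => f v = b).card : ℝ) / (S.card : ℝ) with hp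
  have hp0 : ∀ b, 0 ≤ p b := fun b => by positivity
  have hp1 : ∑ b, p b = 1 := by
    simp only [hp]
    rw [← Finset.sum_div, ← Nat.cast_sum,
      ← Finset.card_eq_sum_card_fiberwise (f := f) (fun x _ => Finset.mem_coe.2 (mem_univ _)),
      div_self hS.ne']
  have h1 : ∑ b, (p b - 1 / Fintype.card B) / Real.log 2 ≤
      ∑ b, (p b * Real.logb 2 (p b) - p b * Real.logb 2 (1 / Fintype.card B)) :=
    Finset.sum_le_sum fun b _ => mul_logb_sub_ge (hp0 b) (by positivity)
  rw [← Finset.sum_div, Finset.sum_sub_distrib, Finset.sum_sub_distrib, ← Finset.sum_mul, hp1]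
    at h1
  have h3 : ∑ _b : B, (1 : ℝ) / Fintype.card B = 1 := by
    simp [hB.ne']
  rw [h3, one_div, Real.logb_inv] at h1
  have h4 : fEnt S f = -∑ b, p b * Real.logb 2 (p b) := by
    simp only [fEnt, hp, Finset.sum_neg_distrib]
  rw [h4]
  simp at h1
  linarith

lemma fEnt_const {V B : Type*} [Fintype B] (S : Finset V) (f : V → B) (b₀ : B)
    (h : ∀ v ∈ S, f v = b₀) : fEnt S f = 0 := by
  unfold fEnt
  refine Finset.sum_eq_zero fun b _ => ?_
  by_cases hb : b = b₀
  · subst hb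
    rw [Finset.filter_true_of_mem h]
    rcases S.eq_empty_or_nonempty with rfl | hne
    · simp
    · have hS : (S.card : ℝ) ≠ 0 := by exact_mod_cast hne.card_pos.ne'
      simp [div_self hS]
  · rw [Finset.filter_false_of_mem fun v hv e => hb (by rw [← e, h v hv])]
    simp

/-! ### Uniform probabilities -/

lemma prS_eq {V : Type*} (S : Finset V) (P : V → Prop) [DecidablePred P] :
    prS S P = ((S.filter P).card : ℝ) / (S.card : ℝ) := by
  unfold prS; congr!

lemma prS_nonneg {V : Type*} (S : Finset V) (P : V → Prop) : 0 ≤ prS S P := by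
  unfold prS; positivity

lemma prS_le_one {V : Type*} (S : Finset V) (P : V → Prop) : prS S P ≤ 1 := by
  unfold prS
  exact div_le_one_of_le₀ (by exact_mod_cast Finset.card_filter_le _ _) (by positivity)

lemma prS_mono {V : Type*} (S : Finset V) {P Q : V → Prop} (h : ∀ v ∈ S, P v → Q v) :
    prS S P ≤ prS S Q := by
  unfold prS
  refine div_le_div_of_nonneg_right ?_ (by positivity)
  exact_mod_cast Finset.card_le_card fun v hv => by
    rw [Finset.mem_filter] at hv ⊢; exact ⟨hv.1, h v hv.1 hv.2⟩

/-- The law of total probability. -/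
lemma sum_prS_and {V C : Type*} [Fintype C] (S : Finset V) (g : V → C) (P : V → Prop) :
    ∑ c, prS S (fun v => g v = c ∧ P v) = prS S P := by
  unfold prS
  rw [← Finset.sum_div, ← Nat.cast_sum]
  congr 2
  rw [Finset.card_eq_sum_card_fiberwise (f := g) (s := S.filter P) (t := univ)
    (fun x _ => Finset.mem_coe.2 (mem_univ _))]
  refine Finset.sum_congr rfl fun c _ => congrArg _ ?_
  ext v; simp only [Finset.mem_filter]; tauto

lemma prS_mul_cond {V : Type*} (S : Finset V) (P Q : V → Prop) [DecidablePred P] :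
    prS S P * prS (S.filter P) Q = prS S (fun v => P v ∧ Q v) := by
  have h0 : (S.filter fun v => P v ∧ Q v) = (S.filter P).filter Q := by
    rw [Finset.filter_filter]
  rw [prS_eq S P, prS_eq _ Q, prS_eq S, h0]
  rcases (S.filter P).eq_empty_or_nonempty with h | h
  · rw [h]; simp
  · have h0 : ((S.filter P).card : ℝ) ≠ 0 := by exact_mod_cast h.card_pos.ne'
    field_simp

lemma prS_true {V : Type*} (S : Finset V) (h : S.Nonempty) : prS S (fun _ => True) = 1 := by
  have hS : (S.card : ℝ) ≠ 0 := by exact_mod_cast h.card_pos.ne'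
  simp [prS, hS]

lemma prS_not {V : Type*} (S : Finset V) (h : S.Nonempty) (P : V → Prop) :
    prS S (fun v => ¬ P v) = 1 - prS S P := by
  have hS : (S.card : ℝ) ≠ 0 := by exact_mod_cast h.card_pos.ne'
  have h1 := Finset.card_filter_add_card_filter_not (s := S) P
  have h2 : ((S.filter P).card : ℝ) + ((S.filter fun v => ¬ P v).card : ℝ) = S.card := by
    exact_mod_cast h1
  rw [prS_eq S P, prS_eq S, eq_sub_iff_add_eq, ← add_div, add_comm, h2, div_self hS]

lemma fEnt_bool {V : Type*} (S : Finset V) (f : V → Bool) (h : S.Nonempty) :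
    fEnt S f = binEnt (prS S (fun v => f v = true)) := by
  have h1 : prS S (fun v => f v = false) = 1 - prS S (fun v => f v = true) := by
    rw [← prS_not S h]; congr 1; funext v; simp
  have h2 : fEnt S f = -(prS S (fun v => f v = true) * Real.logb 2 (prS S (fun v => f v = true)))
      + -(prS S (fun v => f v = false) * Real.logb 2 (prS S (fun v => f v = false))) := by
    simp only [fEnt, prS, Fintype.sum_bool]
  rw [h2, h1]; unfold binEnt; ring

/-! ### Prefix statistics -/

section
variable {n ρ : ℕ} {A : Type} [Fintype A]

lemma sum_prW (a₀ : A) (S : Finset (Vtx n ρ A)) (hne : S.Nonempty) (i : ℕ) :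
    ∑ w, prW a₀ S i w = 1 := by
  have h := sum_prS_and S (Wp a₀ i) (fun _ => True)
  rw [prS_true S hne] at h
  simpa [prW] using h

variable [DecidableEq A]

lemma sum_prW_qiW (a₀ : A) (S : Finset (Vtx n ρ A)) (i : Fin n) :
    ∑ w, prW a₀ S i w * qiW a₀ S i w = qi S i := by
  rw [qi, ← sum_prS_and S (Wp a₀ (i : ℕ))]
  refine Finset.sum_congr rfl fun w _ => ?_
  rw [← prS_mul_cond]
  rfl

lemma alphaE_eq (a₀ : A) (S : Finset (Vtx n ρ A)) (i : Fin n) :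
    alphaE a₀ S i = ∑ w, prW a₀ S i w * binEnt (qiW a₀ S i w) := by
  refine Finset.sum_congr rfl fun w _ => ?_
  change prW a₀ S i w * fEnt _ _ = prW a₀ S i w * _
  rcases (S.filter fun v => Wp a₀ (i : ℕ) v = w).eq_empty_or_nonempty with h | h
  · have h0 : prW a₀ S i w = 0 := by
      rw [prW, prS_eq, h]; simp
    rw [h0, zero_mul, zero_mul]
  · refine congrArg _ ?_
    rw [fEnt_bool _ _ (by convert h)]
    unfold qiW
    congr!

lemma betaE_eq (a₀ : A) (S : Finset (Vtx n ρ A)) (i : Fin n) :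
    betaE a₀ S i = ∑ w, prW a₀ S i w * betaW a₀ S i w := by
  unfold betaE betaW cEnt
  rw [Fintype.sum_prod_type]
  refine Finset.sum_congr rfl fun w _ => ?_
  rw [Finset.mul_sum]
  refine Finset.sum_congr rfl fun x _ => ?_
  have h := prS_mul_cond S (fun v => Wp a₀ (i : ℕ) v = w) (fun v => Xb v i = x)
  have hf : (S.filter fun v => (Wp a₀ (i : ℕ) v, Xb v i) = (w, x)) =
      (S.filter fun v => Wp a₀ (i : ℕ) v = w).filter fun v => Xb v i = x := by
    ext v; simp [and_assoc]
  have hp : prS S (fun v => (Wp a₀ (i : ℕ) v, Xb v i) = (w, x)) =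
      prS S (fun v => Wp a₀ (i : ℕ) v = w ∧ Xb v i = x) := by
    congr 1; funext v; simp
  rw [← mul_assoc]
  change prS S (fun v => (Wp a₀ (i : ℕ) v, Xb v i) = (w, x)) * fEnt _ _
    = prS S _ * prS _ _ * fEnt _ _
  rw [hp, ← h]
  congr 2
  convert hf

lemma betaW_le (a₀ : A) (S : Finset (Vtx n ρ A)) (i : Fin n) (w : Pfx n A) :
    betaW a₀ S i w ≤ qiW a₀ S i w * Real.logb 2 (Fintype.card A) := by
  have : Nonempty A := ⟨a₀⟩
  unfold betaW cEnt
  rw [Fintype.sum_bool]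
  have h0 : ∀ T : Finset (Vtx n ρ A), (∀ v ∈ T, Xb v i = false) →
      fEnt T (fun v => Yv a₀ v i) = 0 := by
    refine fun T hT => fEnt_const _ _ a₀ fun v hv => ?_
    have hv := hT v hv
    simp only [Xb, decide_eq_false_iff_not] at hv
    simp [Yv, hv]
  refine le_trans (le_of_eq (add_eq_left.2 (mul_eq_zero_of_right _
    (h0 _ fun v hv => by simp only [Finset.mem_filter] at hv; exact hv.2)))) ?_
  refine le_trans (mul_le_mul_of_nonneg_left (fEnt_le_logb_card _ _) (by positivity))
    (le_of_eq (congrArg (· * _) ?_))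
  unfold qiW prS
  congr!

/-- Adjacent vertices agree on common variables, so they have neighbouring prefixes. Hence the
non-neighbouring pairs of prefixes have mass at most `1 - den S`. -/
lemma prefix_nonnbr_le (ψ : CSP n A) (a₀ : A) (S : Finset (Vtx n ρ A)) (hne : S.Nonempty)
    (i : ℕ) :
    ∑ w, prW a₀ S i w * (∑ σ', if ¬ PfxNbr n A i w σ' then prW a₀ S i σ' else 0)
      ≤ 1 - den ψ S := by
  have hS : (S.card : ℝ) ≠ 0 := by exact_mod_cast hne.card_pos.ne'
  have hnbr : ∀ u v : Vtx n ρ A, PAdj ψ u v → PfxNbr n A i (Wp a₀ i u) (Wp a₀ i v) := by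
    rintro u v ⟨-, -, h, -⟩ j hj hu hv
    simp only [Wp, hj, if_true, Xb, decide_eq_true_eq] at hu hv ⊢
    simp only [Yv, hu, hv, dif_pos]
    exact h j hu hv
  have hden : 1 - den ψ S = prS (S ×ˢ S) (fun p => ¬ PAdj ψ p.1 p.2) := by
    rw [prS_not _ (hne.product hne)]
    rw [den, prS_eq, Finset.card_product, Nat.cast_mul, sq]
  rw [hden]
  refine le_trans (b := prS (S ×ˢ S) (fun p => ¬ PfxNbr n A i (Wp a₀ i p.1) (Wp a₀ i p.2)))
    (le_of_eq ?_) (prS_mono _ fun p _ h hp => h (hnbr _ _ hp))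
  rw [← sum_prS_and (S ×ˢ S) (fun p => Wp a₀ i p.1)]
  refine Finset.sum_congr rfl fun w _ => ?_
  rw [← sum_prS_and (S ×ˢ S) (fun p => Wp a₀ i p.2), Finset.mul_sum]
  refine Finset.sum_congr rfl fun σ' _ => ?_
  by_cases h : PfxNbr n A i w σ'
  · rw [if_neg (not_not.2 h), mul_zero]
    rw [prS_eq (S ×ˢ S), Finset.filter_false_of_mem]
    · simp
    · rintro p - ⟨h1, h2, h3⟩
      rw [h1, h2] at h3; exact h3 h
  · rw [if_pos h]
    have he : ((S ×ˢ S).filter fun p => Wp a₀ i p.2 = σ' ∧ Wp a₀ i p.1 = w ∧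
        ¬ PfxNbr n A i (Wp a₀ i p.1) (Wp a₀ i p.2)) =
        (S.filter fun v => Wp a₀ i v = w) ×ˢ (S.filter fun v => Wp a₀ i v = σ') := by
      ext p
      simp only [Finset.mem_filter, Finset.mem_product]
      constructor
      · rintro ⟨⟨h1, h2⟩, h3, h4, -⟩; exact ⟨⟨h1, h4⟩, h2, h3⟩
      · rintro ⟨⟨h1, h4⟩, h2, h3⟩; exact ⟨⟨h1, h2⟩, h3, h4, by rw [h3, h4]; exact h⟩
    rw [prW, prW, prS_eq S, prS_eq S, prS_eq (S ×ˢ S), he, Finset.card_product,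
      Finset.card_product, div_mul_div_comm, Nat.cast_mul, Nat.cast_mul]

end

/-! ### The mass of good prefixes -/

/-- The argument for an abstract random variable `W` with values in a finite type: `μ` is the law
of `W`, `r w = Pr[X = 1 | W = w]`, `β w` is the entropy contributed by the prefix `w`, `Nb` is the
neighbourhood relation and `a` is the alphabet size. -/
lemma good_mass {ι : Type*} [Fintype ι] (μ r β : ι → ℝ) (Nb : ι → ι → Prop) (Good : ι → Prop)
    (a q L ε₁ ε₂ ε₃ δ : ℝ) (ha2 : 2 ≤ a) (hL : L = Real.logb 2 a)
    (hε2 : 0 < ε₂) (hε2' : ε₂ < 1 / 5) (hε₃ : 0 < ε₃)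
    (hδ : δ = (ε₂ / a ^ (2 / ε₂)) ^ 4) (hε₁ : ε₁ ≥ 4 * ε₂ * L + 8 * ε₃)
    (hμ : ∀ w, 0 ≤ μ w) (hμ1 : ∑ w, μ w = 1) (hr0 : ∀ w, 0 ≤ r w) (hr1 : ∀ w, r w ≤ 1)
    (hμr : ∑ w, μ w * r w = q)
    (hα : binEnt q - 2 * q * L ≤ ∑ w, μ w * binEnt (r w))
    (hβ : (1 / 2) * ε₁ * q ≤ ∑ w, μ w * β w) (hβr : ∀ w, β w ≤ r w * L)
    (hNb : ∑ w, μ w * (∑ σ', if ¬ Nb w σ' then μ σ' else 0) ≤ δ)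
    (hGood : ∀ w, (∑ σ', if Nb w σ' then μ σ' * r σ' else 0) ≥ (1 - ε₂) * q →
      β w ≥ ε₃ * r w → Good w) :
    ε₁ / (8 * L) * q ≤ ∑ w, if Good w then μ w * r w else 0 := by
  have hL1 : 1 ≤ L := by
    rw [hL, ← Real.logb_self_eq_one (b := 2) (by norm_num)]
    exact Real.logb_le_logb_of_le (by norm_num) (by norm_num) ha2
  set P : ℝ := a ^ (2 / ε₂) with hP
  have hP1 : 1 ≤ P := Real.one_le_rpow (by linarith) (by positivity)
  have hx0 : 0 < ε₂ / P := by positivity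
  -- `η = √δ` is the threshold in Markov's inequality.
  set η : ℝ := (ε₂ / P) ^ 2 with hη
  have hη0 : 0 < η := by positivity
  have hδη : δ = η * η := by rw [hδ, hη]; ring
  have hlog : 4 * L ≤ ε₂ * Real.logb 2 (1 / η) := by
    have h1 : Real.logb 2 (1 / η) = 2 * (2 / ε₂ * L - Real.logb 2 ε₂) := by
      rw [hη, one_div, Real.logb_inv, Real.logb_pow, Real.logb_div hε2.ne' (by linarith), hP,
        Real.logb_rpow_eq_mul_logb_of_pos (by linarith), ← hL]
      push_cast; ring
    have h2 : Real.logb 2 ε₂ ≤ 0 :=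
      Real.logb_nonpos (by norm_num) hε2.le (by linarith)
    have h3 : ε₂ * (2 * (2 / ε₂ * L - Real.logb 2 ε₂)) = 4 * L - 2 * (ε₂ * Real.logb 2 ε₂) := by
      field_simp; ring
    rw [h1, h3]; nlinarith
  have hq : 0 ≤ q := hμr ▸ Finset.sum_nonneg fun w _ => mul_nonneg (hμ w) (hr0 w)
  have hε1 : 0 ≤ ε₁ := by nlinarith
  rcases hq.eq_or_lt with hq0 | hq0
  · rw [← hq0, mul_zero]
    refine Finset.sum_nonneg fun w _ => ?_
    split_ifs
    · exact mul_nonneg (hμ w) (hr0 w)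
    · exact le_rfl
  -- Events of probability at most `η` have conditional probability at most `ε₂` given `X = 1`.
  have transfer : ∀ (B : ι → Prop) [DecidablePred B], (∑ w, if B w then μ w else 0) ≤ η →
      (∑ w, if B w then μ w * r w else 0) ≤ ε₂ * q := by
    intro B _ hB
    have h := mass_transfer μ r q L η hμ hμ1 hr0 hr1 hμr hq0 hα hη0 B hB
    set Q := ∑ w, if B w then μ w * r w else 0
    have hQ : 0 ≤ Q := Finset.sum_nonneg fun w _ => by
      split_ifs
      · exact mul_nonneg (hμ w) (hr0 w)
      · exact le_rfl
    have h1 : Q * (4 * L) ≤ Q * (ε₂ * Real.logb 2 (1 / η)) := mul_le_mul_of_nonneg_left hlog hQ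
    have h2 : ε₂ * (Q * Real.logb 2 (1 / η)) ≤ ε₂ * ((2 * L + 1) * q) :=
      mul_le_mul_of_nonneg_left h hε2.le
    have h3 : ε₂ * q * (2 * L + 1) ≤ ε₂ * q * (4 * L) :=
      mul_le_mul_of_nonneg_left (by linarith) (by positivity)
    have h4 : Q * (4 * L) ≤ ε₂ * q * (4 * L) := by linarith
    exact le_of_mul_le_mul_right h4 (by linarith)
  set M : ι → ℝ := fun w => ∑ σ', if ¬ Nb w σ' then μ σ' else 0 with hM
  have hM0 : ∀ w, 0 ≤ M w := fun w => Finset.sum_nonneg fun σ' _ => by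
    split_ifs
    · exact le_rfl
    · exact hμ σ'
  have hMsum : ∑ w, μ w * M w ≤ η * η := by
    rw [← hδη]
    exact hNb
  -- Prefixes with many non-neighbours: unlikely by Markov's inequality.
  have hBad : (∑ w, if η < M w then μ w * r w else 0) ≤ ε₂ * q := by
    refine transfer _ (le_of_mul_le_mul_right (le_trans ?_ hMsum) hη0)
    rw [Finset.sum_mul]
    refine Finset.sum_le_sum fun w _ => ?_
    split_ifs with h
    · exact mul_le_mul_of_nonneg_left h.le (hμ w)
    · rw [zero_mul]; exact mul_nonneg (hμ w) (hM0 w)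
  have hGoodN : ∀ w, M w ≤ η →
      (∑ σ', if Nb w σ' then μ σ' * r σ' else 0) ≥ (1 - ε₂) * q := by
    intro w hw
    have h1 := transfer (fun σ' => ¬ Nb w σ') hw
    have h2 : (∑ σ', if Nb w σ' then μ σ' * r σ' else 0) +
        (∑ σ', if ¬ Nb w σ' then μ σ' * r σ' else 0) = q := by
      rw [← Finset.sum_add_distrib, ← hμr]
      refine Finset.sum_congr rfl fun σ' _ => ?_
      by_cases h : Nb w σ' <;> simp [h]
    linarith
  set G := ∑ w, if Good w then μ w * r w else 0 with hG
  have hsplit : ∑ w, μ w * β w ≤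
      L * G + L * (∑ w, if η < M w then μ w * r w else 0) + ε₃ * ∑ w, μ w * r w := by
    rw [hG, Finset.mul_sum, Finset.mul_sum, Finset.mul_sum, ← Finset.sum_add_distrib,
      ← Finset.sum_add_distrib]
    refine Finset.sum_le_sum fun w _ => ?_
    have hb : μ w * β w ≤ μ w * (r w * L) :=
      mul_le_mul_of_nonneg_left (hβr w) (hμ w)
    have hμrw : 0 ≤ μ w * r w := mul_nonneg (hμ w) (hr0 w)
    have hLm : 0 ≤ L * (μ w * r w) := mul_nonneg (by linarith) hμrw
    have h3m : 0 ≤ ε₃ * (μ w * r w) := mul_nonneg hε₃.le hμrw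
    by_cases h1 : η < M w
    · rw [if_pos h1]
      split_ifs <;> linarith
    · rw [if_neg h1]
      by_cases h2 : Good w
      · rw [if_pos h2]; linarith
      · rw [if_neg h2]
        have h3 : β w < ε₃ * r w := by
          by_contra h
          exact h2 (hGood w (hGoodN w (not_lt.1 h1)) (not_lt.1 h))
        have := mul_le_mul_of_nonneg_left h3.le (hμ w)
        linarith
  rw [hμr] at hsplit
  have h5 : L * (∑ w, if η < M w then μ w * r w else 0) ≤ L * (ε₂ * q) :=
    mul_le_mul_of_nonneg_left hBad (by linarith)
  have h6 : (4 * ε₂ * L + 8 * ε₃) * q ≤ ε₁ * q := mul_le_mul_of_nonneg_right hε₁ hq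
  have h7 : 0 ≤ ε₃ * q := mul_nonneg hε₃.le hq
  have h8 : 0 ≤ ε₂ * L * q := by positivity
  have h9 : ε₁ * q ≤ G * (8 * L) := by nlinarith
  rw [div_mul_eq_mul_div, div_le_iff₀ (by linarith)]
  exact h9

/-- Corollary 3.3: if den(S) > 1 − δ then for every good index i,
Σ_{good w} Pr[w]·q_i(w) ≥ (ε₁/(8·log₂|A|))·q_i. -/
theorem statement_9 (n : ℕ) (A : Type) [Fintype A] [DecidableEq A]
    (hA : 2 ≤ Fintype.card A) (ε₀ ε₁ ε₂ ε₃ δ : ℝ)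
    (hε₀ : 0 < ε₀) (hε₂ : 0 < ε₂ ∧ ε₂ < 0.2) (hε₃ : 0 < ε₃)
    (hδ : δ = (ε₂ / (Fintype.card A : ℝ) ^ (2 / ε₂)) ^ 4)
    (hε₁ : ε₁ ≥ 4 * ε₂ * Real.logb 2 (Fintype.card A) + 8 * ε₃)
    (ψ : CSP n A) (a₀ : A) (S : Finset (Vtx n (rho n) A))
    (hS : S.card = ⌊kprime n (Fintype.card A) ε₀⌋₊)
    (hden : den ψ S > 1 - δ) :
    ∀ i : Fin n, GoodIdx a₀ S ε₁ i →
      (∑ w : Pfx n A,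
          if GoodPfx a₀ S ε₁ ε₂ ε₃ i w then prW a₀ S (i : ℕ) w * qiW a₀ S i w else 0)
        ≥ ε₁ / (8 * Real.logb 2 (Fintype.card A)) * qi S i := by
  intro i hi
  obtain ⟨hε2, hε2'⟩ := hε₂
  norm_num at hε2'
  have ha2 : (2 : ℝ) ≤ Fintype.card A := by exact_mod_cast hA
  have hP1 : 1 ≤ (Fintype.card A : ℝ) ^ (2 / ε₂) :=
    Real.one_le_rpow (by linarith) (by positivity)
  have hδ1 : δ < 1 := by
    rw [hδ]
    refine pow_lt_one₀ (by positivity) ?_ (by norm_num)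
    rw [div_lt_one (by linarith)]
    linarith
  -- The empty set has junk density `0 / 0 = 0`, which is below `1 - δ`.
  have hne : S.Nonempty := by
    rw [Finset.nonempty_iff_ne_empty]
    rintro rfl
    simp [den] at hden
    linarith
  have hα := hi.1
  have hβ := hi.2
  rw [alphaE_eq] at hα
  rw [betaE_eq] at hβ
  exact good_mass (fun w => prW a₀ S (i : ℕ) w) (fun w => qiW a₀ S i w)
    (fun w => betaW a₀ S i w) (PfxNbr n A (i : ℕ)) (GoodPfx a₀ S ε₁ ε₂ ε₃ i)
    (Fintype.card A) (qi S i) (Real.logb 2 (Fintype.card A)) ε₁ ε₂ ε₃ δ ha2 rfl hε2 hε2' hε₃ hδ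
    hε₁ (fun w => prS_nonneg _ _) (sum_prW a₀ S hne i) (fun w => prS_nonneg _ _)
    (fun w => prS_le_one _ _) (sum_prW_qiW a₀ S i) hα hβ (betaW_le a₀ S i)
    ((prefix_nonnbr_le ψ a₀ S hne i).trans (by linarith)) (fun w h1 h2 => ⟨hi, h1, h2⟩)
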